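/- Let γ ∈ ℝ, let q ≥ 3 be fixed, and let K be a location-scale invariant kernel, not everywhere constant, such that E[|K((Z_{q−j:q−1})_{j=1}^{q})|^p] < ∞ for all p > 0 (Z's iid standard GP(γ), Z_{0:q−1} := 0). Suppose m = m_n satisfies m = o(n^{1−ε}) and ln(n) = o(m^{1−δ}) as n → ∞ for some ε, δ > 0, and define ℓ_n = ⌊(m/n + (ln(n)/(2m))^{1/2}) m⌋. With ζ_{m,ℓ} = cov(K_m(Z_S), K_m(Z_{S'})) for iid standard GP(γ) random variables indexed by sets S, S' with |S| = |S'| = m and |S ∩ S'| = ℓ, one has max_{1 ≤ ℓ ≤ ℓ_n} |ℓ^{−1} ζ_{m,ℓ} − ζ_{m,1}| = o(1/m) as n → ∞. -/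

import Mathlib

open MeasureTheory ProbabilityTheory Filter Real Set Topology
open scoped ENNReal NNReal Classical

noncomputable section

/-- The `j`-th largest entry of the tuple `x` (`j = 0` gives the maximum, `j = 1` the
second largest, ...); `0` when `j` is out of range. -/
def descStat {m : ℕ} (x : Fin m → ℝ) (j : ℕ) : ℝ :=
  if h : j < m then (x ∘ Tuple.sort x) ⟨m - 1 - j, by omega⟩ else 0

/-- The kernel of degree `m` obtained from `K` by applying it to the top-`q`
(descending) order statistics: `K_m(x_1,…,x_m) = K(x_{m:m},…,x_{m−q+1:m})`. -/
def Km {q : ℕ} (K : (Fin q → ℝ) → ℝ) (m : ℕ) (x : Fin m → ℝ) : ℝ :=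
  K fun j => descStat x (j : ℕ)

/-- `K(a x_1 + b, …, a x_q + b) = K(x_1, …, x_q)` for all `a > 0`, `b ∈ ℝ`. -/
def LocScaleInvariant {q : ℕ} (K : (Fin q → ℝ) → ℝ) : Prop :=
  ∀ a b : ℝ, 0 < a → ∀ x : Fin q → ℝ, K (fun j => a * x j + b) = K x

/-- `h_γ(y) = (y^γ - 1)/γ`, interpreted as `log y` when `γ = 0`. -/
def hGamma (γ : ℝ) (y : ℝ) : ℝ := if γ = 0 then Real.log y else (y ^ γ - 1) / γ

lemma measurable_hGamma (γ : ℝ) : Measurable (hGamma γ) := by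
  unfold hGamma
  split_ifs
  · exact Real.measurable_log
  · fun_prop

/-- The uniform distribution on `(0,1)`. -/
def unif01 : Measure ℝ := volume.restrict (Set.Ioo (0:ℝ) 1)

instance : IsProbabilityMeasure unif01 := ⟨by simp [unif01]⟩

/-- The standard Pareto(1) distribution, with cdf `1 - 1/y` for `y ≥ 1`. -/
def pareto1 : Measure ℝ := ProbabilityTheory.paretoMeasure 1 1

instance : IsProbabilityMeasure pareto1 :=
  ProbabilityTheory.isProbabilityMeasure_paretoMeasure one_pos one_pos

/-- The standard generalized Pareto distribution `GP(γ)`: the law of `h_γ(Y)` for `Y`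
standard Pareto(1). -/
def gpMeasure (γ : ℝ) : Measure ℝ := pareto1.map (hGamma γ)

instance (γ : ℝ) : IsProbabilityMeasure (gpMeasure γ) :=
  Measure.isProbabilityMeasure_map (measurable_hGamma γ).aemeasurable

/-- The unit exponential distribution: the law of `-log U` for `U` uniform on `(0,1)`. -/
def expMeasure1 : Measure ℝ := unif01.map fun u => -Real.log u

instance : IsProbabilityMeasure expMeasure1 :=
  Measure.isProbabilityMeasure_map Real.measurable_log.neg.aemeasurable

/-- The Erlang(q) distribution: the law of the sum of `q` independent unit exponentials. -/
def erlangMeasure (q : ℕ) : Measure ℝ :=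
  (Measure.pi fun _ : Fin q => expMeasure1).map fun e => ∑ i, e i

instance (q : ℕ) : IsProbabilityMeasure (erlangMeasure q) :=
  Measure.isProbabilityMeasure_map
    (Finset.measurable_sum _ fun i _ => measurable_pi_apply i).aemeasurable

/-- The joint law of `r` iid `GP(γ)` random variables. -/
def gpPi (γ : ℝ) (r : ℕ) : Measure (Fin r → ℝ) := Measure.pi fun _ => gpMeasure γ

instance (γ : ℝ) (r : ℕ) : IsProbabilityMeasure (gpPi γ r) := by
  unfold gpPi; infer_instance

/-- The vector `(Z_{q-j:q-1})_{j=1}^{q}`: the descending order statistics of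
`z_1,…,z_{q-1}` with an extra last entry `Z_{0:q-1} := 0`. -/
def refVec {q : ℕ} (z : Fin (q-1) → ℝ) : Fin q → ℝ := fun j => descStat z (j : ℕ)

/-- `θ = E[K((Z_{q-j:q-1})_{j=1}^{q})]` for iid `GP(γ)` variables `Z_1,…,Z_{q-1}`. -/
def thetaK (γ : ℝ) {q : ℕ} (K : (Fin q → ℝ) → ℝ) : ℝ :=
  ∫ z, K (refVec z) ∂(gpPi γ (q-1))

/-- all moments of `K((Z_{q-j:q-1})_{j=1}^{q})` are finite. -/
def MomentCond (γ : ℝ) {q : ℕ} (K : (Fin q → ℝ) → ℝ) : Prop :=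
  ∀ p : ℝ, 0 < p →
    ∫⁻ z, ENNReal.ofReal (|K (refVec z)| ^ p) ∂(gpPi γ (q-1)) < ⊤

/-- The asymptotic variance
`σ²_K(γ) = ∫_0^∞ (E[K̄_{q+1}((Z_{q-j:q-1})_{j=1}^q, h_γ(S_q/x))])² dx`. -/
def sigmaSqK (γ : ℝ) {q : ℕ} (K : (Fin q → ℝ) → ℝ) : ℝ :=
  ∫ x in Set.Ioi (0:ℝ),
    (∫ zs : (Fin (q-1) → ℝ) × ℝ,
        (Km K (q+1) (Fin.snoc (refVec zs.1) (hGamma γ (zs.2 / x))) - thetaK γ K)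
      ∂((gpPi γ (q-1)).prod (erlangMeasure q))) ^ 2

/-- The U-statistic with kernel `K_m` evaluated on the sample `z`. -/
def UStat {q : ℕ} (K : (Fin q → ℝ) → ℝ) (m n : ℕ) (z : Fin n → ℝ) : ℝ :=
  ((n.choose m : ℝ))⁻¹ *
    ∑ I ∈ Finset.powersetCard m (Finset.univ : Finset (Fin n)),
      Km K I.card fun j => z (I.orderIsoOfFin rfl j).1

/-- Condition on the degree sequence: `m = o(n^{1-ε})` and `log n = o(m^{1-δ})`. -/
def DegreeCond (m : ℕ → ℕ) : Prop :=
  ∃ ε > (0:ℝ), ∃ δ > (0:ℝ),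
    Tendsto (fun n => (m n : ℝ) / (n : ℝ) ^ (1 - ε)) atTop (𝓝 0) ∧
    Tendsto (fun n : ℕ => Real.log n / (m n : ℝ) ^ (1 - δ)) atTop (𝓝 0)

/-- `ζ_{m,ℓ} = cov(K_m(Z_S), K_m(Z_{S'}))` for the blocks `S = [1:m]`,
`S' = [(m-ℓ+1):(2m-ℓ)]` (zero-indexed here), which overlap in `ℓ` indices. -/
def zetaCov {Ω : Type*} [MeasurableSpace Ω] (P : Measure Ω) {q : ℕ}
    (K : (Fin q → ℝ) → ℝ) (Z : ℕ → Ω → ℝ) (m ℓ : ℕ) : ℝ :=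
  (∫ ω, Km K m (fun i : Fin m => Z i ω) * Km K m (fun i : Fin m => Z (m - ℓ + i) ω) ∂P)
    - (∫ ω, Km K m (fun i : Fin m => Z i ω) ∂P)
      * (∫ ω, Km K m (fun i : Fin m => Z (m - ℓ + i) ω) ∂P)

/-- Convergence in distribution to a Gaussian, expressed via pointwise convergence of
the cumulative distribution functions (the Gaussian cdf being continuous). -/
def TendstoGaussian {Ω : Type*} [MeasurableSpace Ω] (P : Measure Ω)
    (T : ℕ → Ω → ℝ) (μ : ℝ) (v : ℝ≥0) : Prop :=
  ∀ x : ℝ, Tendsto (fun n => (P {ω | T n ω ≤ x}).toReal) atTop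
    (𝓝 ((gaussianReal μ v (Set.Iic x)).toReal))

/-- Convergence in probability to the constant `c`. -/
def TendstoInProb {Ω : Type*} [MeasurableSpace Ω] (P : Measure Ω)
    (T : ℕ → Ω → ℝ) (c : ℝ) : Prop :=
  ∀ ε : ℝ, 0 < ε → Tendsto (fun n => (P {ω | ε ≤ |T n ω - c|}).toReal) atTop (𝓝 0)


/-- The truncation level `ℓ_n = ⌊(m/n + (ln n/(2m))^{1/2}) m⌋`. -/
def ellSeq (m : ℕ → ℕ) (n : ℕ) : ℕ :=
  ⌊((m n : ℝ) / (n : ℝ) + Real.sqrt (Real.log n / (2 * (m n : ℝ)))) * (m n : ℝ)⌋₊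

lemma descStat_comp_perm {m : ℕ} (x : Fin m → ℝ) (σ : Equiv.Perm (Fin m)) (j : ℕ) :
    descStat (x ∘ σ) j = descStat x j := by
  unfold descStat
  rw [Tuple.comp_perm_comp_sort_eq_comp_sort]

lemma Km_comp_perm {q : ℕ} (K : (Fin q → ℝ) → ℝ) {m : ℕ} (x : Fin m → ℝ)
    (σ : Equiv.Perm (Fin m)) : Km K m (x ∘ σ) = Km K m x := by
  unfold Km
  simp only [descStat_comp_perm]

lemma measurable_descStat (m j : ℕ) : Measurable (fun x : Fin m → ℝ => descStat x j) := by
  unfold descStat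
  split_ifs with h
  · refine measurable_of_Iic fun t => ?_
    have : (fun x : Fin m → ℝ => (x ∘ Tuple.sort x) ⟨m - 1 - j, by omega⟩) ⁻¹' Iic t
        = {x | ((m - 1 - j : ℕ) : ℝ) < ∑ i : Fin m, if x i ≤ t then (1:ℝ) else 0} := by
      ext x
      simp only [mem_preimage, mem_Iic, mem_ofPred_eq]
      rw [← Tuple.lt_card_le_iff_apply_le_of_monotone (Tuple.monotone_sort x)]
      rw [← Equiv.sum_comp (Tuple.sort x) (fun i => if x i ≤ t then (1:ℝ) else 0),
        Finset.sum_boole, Nat.cast_lt]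
      rfl
    rw [this]
    refine measurableSet_lt measurable_const (Finset.measurable_sum _ fun i _ => ?_)
    exact Measurable.ite (measurableSet_le (measurable_pi_apply i) measurable_const)
      measurable_const measurable_const
  · exact measurable_const

lemma measurable_Km {q : ℕ} {K : (Fin q → ℝ) → ℝ} (hK : Measurable K) (m : ℕ) :
    Measurable (Km K m) :=
  hK.comp (measurable_pi_lambda _ fun j => measurable_descStat m j)

lemma descStat_affine {m : ℕ} (x : Fin m → ℝ) (a b : ℝ) (ha : 0 < a) (j : ℕ) (hj : j < m) :
    descStat (fun i => a * x i + b) j = a * descStat x j + b := by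
  have : (fun i => a * x i + b) ∘ Tuple.sort x
      = (fun i => a * x i + b) ∘ Tuple.sort (fun i => a * x i + b) := by
    rw [Tuple.comp_sort_eq_comp_iff_monotone]
    intro i k hik
    have := Tuple.monotone_sort x hik
    simp only [Function.comp] at this ⊢
    nlinarith
  unfold descStat
  rw [dif_pos hj, dif_pos hj, ← this]
  rfl

lemma Km_affine {q : ℕ} {K : (Fin q → ℝ) → ℝ} (hLS : LocScaleInvariant K) {m : ℕ} (hqm : q ≤ m)
    (x : Fin m → ℝ) (a b : ℝ) (ha : 0 < a) : Km K m (fun i => a * x i + b) = Km K m x := by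
  unfold Km
  rw [← hLS a b ha (fun j => descStat x j)]
  congr 1
  funext j
  exact descStat_affine x a b ha j (by omega)

lemma descStat_insertNth {n : ℕ} (i : Fin (n+1)) (w : Fin n → ℝ) (hw : ∀ k, 0 ≤ w k) (j : ℕ) :
    descStat (i.insertNth (α := fun _ => ℝ) 0 w) j = descStat w j := by
  let s : Fin (n+1) → Fin (n+1) := Fin.cons i (fun k => i.succAbove (Tuple.sort w k))
  have hs : Function.Injective s := by
    rw [Fin.cons_injective_iff]
    refine ⟨?_, fun a b h => ?_⟩
    · rintro ⟨k, hk⟩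
      exact Fin.succAbove_ne _ _ hk
    · exact (Tuple.sort w).injective (Fin.succAbove_right_injective h)
  let σ : Equiv.Perm (Fin (n+1)) := Equiv.ofBijective s (Finite.injective_iff_bijective.1 hs)
  have hσ : (i.insertNth (α := fun _ => ℝ) 0 w) ∘ σ
      = Fin.cons (α := fun _ => ℝ) 0 (w ∘ Tuple.sort w) := by
    funext k
    refine Fin.cases ?_ (fun k => ?_) k
    · simp [σ, s]
    · simp [σ, s]
  have hm : Monotone ((i.insertNth (α := fun _ => ℝ) 0 w) ∘ σ) := by
    rw [hσ]
    intro a b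
    refine Fin.cases ?_ (fun a => ?_) a
    · intro _
      refine Fin.cases ?_ (fun b => ?_) b
      · simp
      · simpa using hw _
    · refine Fin.cases ?_ (fun b => ?_) b
      · intro h; simp at h
      · intro h
        simpa using Tuple.monotone_sort w (Fin.succ_le_succ_iff.1 h)
  have := Tuple.comp_sort_eq_comp_iff_monotone.2 hm
  unfold descStat
  rw [← this, hσ]
  rcases lt_trichotomy j n with h | h | h
  · rw [dif_pos (by omega), dif_pos h]
    have : (⟨n + 1 - 1 - j, by omega⟩ : Fin (n+1)) = Fin.succ ⟨n - 1 - j, by omega⟩ := by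
      ext; simp; omega
    rw [this, Fin.cons_succ]
  · subst h
    rw [dif_pos (by omega), dif_neg (by omega)]
    have : (⟨j + 1 - 1 - j, by omega⟩ : Fin (j+1)) = 0 := by
      ext; simp
    rw [this, Fin.cons_zero]
  · rw [dif_neg (by omega), dif_neg (by omega)]
instance : NullSingletonClass pareto1 := by
  unfold pareto1 paretoMeasure; infer_instance

lemma pareto_Ici_of_le {t : ℝ} (ht : 1 ≤ t) : pareto1 (Ici t) = ENNReal.ofReal (1 / t) := by
  have h0 : 0 < t := by linarith
  unfold pareto1 paretoMeasure
  rw [withDensity_apply _ measurableSet_Ici]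
  have : ∫⁻ x in Ici t, paretoPDF 1 1 x = ∫⁻ x in Ioi t, ENNReal.ofReal (x ^ (-2:ℝ)) := by
    rw [setLIntegral_congr (Ioi_ae_eq_Ici (μ := volume) (a := t)).symm]
    refine setLIntegral_congr_fun measurableSet_Ioi fun x hx => ?_
    have hx' : t < x := hx
    rw [paretoPDF_of_le (by linarith)]
    norm_num
  rw [this, ← ofReal_integral_eq_lintegral_ofReal]
  · rw [integral_Ioi_rpow_of_lt (by norm_num) h0]
    congr 1
    norm_num
    rw [Real.rpow_neg_one]
  · exact integrableOn_Ioi_rpow_of_lt (by norm_num) h0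
  · refine (ae_restrict_iff' measurableSet_Ioi).2 (ae_of_all _ fun x hx => ?_)
    have hx' : t < x := hx
    exact Real.rpow_nonneg (by linarith) _

lemma pareto_Ici (t : ℝ) : pareto1 (Ici t) = ENNReal.ofReal (1 / max t 1) := by
  rcases le_total 1 t with h | h
  · rw [pareto_Ici_of_le h, max_eq_left h]
  · rw [max_eq_right h]
    refine le_antisymm ?_ ?_
    · simpa using prob_le_one
    · rw [← pareto_Ici_of_le le_rfl]
      exact measure_mono (Ici_subset_Ici.2 h)

lemma pareto_scale {a : ℝ} (ha : 1 ≤ a) :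
    pareto1.restrict (Ici a) = pareto1 (Ici a) • pareto1.map (fun w => a * w) := by
  have h0 : 0 < a := by linarith
  have hm : Measurable (fun w : ℝ => a * w) := measurable_const_mul a
  refine Measure.ext_of_Ici _ _ fun t => ?_
  rw [Measure.restrict_apply measurableSet_Ici, Measure.smul_apply,
    Measure.map_apply hm measurableSet_Ici, Ici_inter_Ici, smul_eq_mul]
  have : (fun w : ℝ => a * w) ⁻¹' Ici t = Ici (t / a) := by
    ext w; simp [div_le_iff₀ h0, mul_comm]
  rw [this, pareto_Ici, pareto_Ici, pareto_Ici, ← ENNReal.ofReal_mul (by positivity)]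
  congr 1
  rw [max_eq_left ha, max_eq_left (le_sup_of_le_right ha)]
  have h1 : (0:ℝ) < max (t/a) 1 := by positivity
  have : max t a = a * max (t / a) 1 := by
    rw [mul_max_of_nonneg _ _ h0.le]; congr 1 <;> field_simp
  change 1 / max t a = _
  rw [this]
  field_simp

lemma pareto_pi_scale {a : ℝ} (ha : 1 ≤ a) (n : ℕ) :
    (Measure.pi fun _ : Fin n => pareto1).restrict (univ.pi fun _ => Ici a)
      = (pareto1 (Ici a))^n • (Measure.pi fun _ : Fin n => pareto1).map (fun w k => a * w k) := by
  have hm : Measurable (fun w : ℝ => a * w) := measurable_const_mul a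
  rw [Measure.restrict_pi_pi]
  have : IsProbabilityMeasure (pareto1.map (fun w => a * w)) :=
    Measure.isProbabilityMeasure_map hm.aemeasurable
  rw [Measure.pi_map_pi (μ := fun _ : Fin n => pareto1) (f := fun _ w => a * w)
    (fun _ => hm.aemeasurable)]
  refine Measure.pi_eq fun s hs => ?_
  simp only [pareto_scale ha, Measure.smul_apply, Measure.pi_pi, smul_eq_mul,
    Finset.prod_mul_distrib, Finset.prod_const, Finset.card_univ, Fintype.card_fin]

lemma lintegral_insertNth {n : ℕ} (i : Fin (n+1)) (Φ : (Fin (n+1) → ℝ) → ℝ≥0∞)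
    (hΦ : Measurable Φ) :
    ∫⁻ x, Φ x ∂(Measure.pi fun _ : Fin (n+1) => pareto1)
      = ∫⁻ a, ∫⁻ y, Φ (i.insertNth (α := fun _ => ℝ) a y)
          ∂(Measure.pi fun _ : Fin n => pareto1) ∂pareto1 := by
  have h := (measurePreserving_piFinSuccAbove (fun _ : Fin (n+1) => pareto1) i).symm
  rw [← h.lintegral_comp hΦ, lintegral_prod]
  · rfl
  · exact (hΦ.comp (MeasurableEquiv.measurable _)).aemeasurable

lemma ae_pareto : ∀ᵐ a ∂pareto1, 1 ≤ a := by
  have : Ici (1:ℝ) ∈ ae pareto1 := by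
    rw [mem_ae_iff_prob_eq_one measurableSet_Ici, pareto_Ici_of_le le_rfl]; simp
  exact this

lemma pareto_step {n : ℕ} (Φ : (Fin (n+1) → ℝ) → ℝ≥0∞) (hΦ : Measurable Φ)
    (Ψ : (Fin n → ℝ) → ℝ≥0∞)
    (h : ∀ (i : Fin (n+1)) (a : ℝ) (w : Fin n → ℝ), 1 ≤ a → (∀ k, 1 ≤ w k) →
      Φ (i.insertNth (α := fun _ => ℝ) a (fun k => a * w k)) = Ψ w) :
    ∫⁻ x, Φ x ∂(Measure.pi fun _ : Fin (n+1) => pareto1)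
      ≤ ∫⁻ w, Ψ w ∂(Measure.pi fun _ : Fin n => pareto1) := by
  let E : Fin (n+1) → Set (Fin (n+1) → ℝ) := fun i => {x | ∀ k, x i ≤ x (i.succAbove k)}
  let E' : Fin (n+1) → Set (Fin (n+1) → ℝ) := fun i => {x | ∀ k, x i < x (i.succAbove k)}
  have hE : ∀ i, MeasurableSet (E i) := fun i => by
    simp only [E, ofPred_forall]
    exact MeasurableSet.iInter fun k =>
      measurableSet_le (measurable_pi_apply _) (measurable_pi_apply _)
  have hE' : ∀ i, MeasurableSet (E' i) := fun i => by
    simp only [E', ofPred_forall]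
    exact MeasurableSet.iInter fun k =>
      measurableSet_lt (measurable_pi_apply _) (measurable_pi_apply _)
  set I : ℝ≥0∞ := ∫⁻ a, (pareto1 (Ici a))^n ∂pareto1 with hI
  set M := ∫⁻ w, Ψ w ∂(Measure.pi fun _ : Fin n => pareto1) with hM
  have hwae : ∀ᵐ w ∂(Measure.pi fun _ : Fin n => pareto1), ∀ k, 1 ≤ w k :=
    ae_all_iff.2 fun k => (Measure.tendsto_eval_ae_ae (i := k)).eventually ae_pareto
  have h1 : ∀ i, ∫⁻ x in E i, Φ x ∂(Measure.pi fun _ : Fin (n+1) => pareto1) = I * M := by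
    intro i
    rw [← lintegral_indicator (hE i), lintegral_insertNth i _ (hΦ.indicator (hE i)), hI,
      ← lintegral_mul_const'' _ ?_]
    swap
    · refine AEMeasurable.pow_const ?_ _
      simp only [pareto_Ici]
      fun_prop
    refine lintegral_congr_ae ?_
    filter_upwards [ae_pareto] with a ha
    have : ∀ y : Fin n → ℝ, (E i).indicator Φ (i.insertNth (α := fun _ => ℝ) a y)
        = (univ.pi fun _ => Ici a).indicator
          (fun y => Φ (i.insertNth (α := fun _ => ℝ) a y)) y := by
      intro y
      simp only [indicator, E, mem_ofPred_eq, Fin.insertNth_apply_same,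
        Fin.insertNth_apply_succAbove, mem_univ_pi, mem_Ici]
    have hmi : Measurable fun y : Fin n → ℝ => Φ (i.insertNth (α := fun _ => ℝ) a y) := by
      refine hΦ.comp ?_
      exact (MeasurableEquiv.piFinSuccAbove (fun _ => ℝ) i).symm.measurable.comp
        measurable_prodMk_left
    simp only [this]
    rw [lintegral_indicator (MeasurableSet.univ_pi fun _ => measurableSet_Ici),
      pareto_pi_scale ha, lintegral_smul_measure, lintegral_map hmi (by fun_prop), smul_eq_mul]
    congr 1
    refine lintegral_congr_ae ?_
    filter_upwards [hwae] with w hw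
    exact h i a w ha hw
  have h2 : ∀ i, (Measure.pi fun _ : Fin (n+1) => pareto1) (E' i) = I := by
    intro i
    rw [← lintegral_indicator_one (hE' i),
      lintegral_insertNth i _ (measurable_one.indicator (hE' i)), hI]
    refine lintegral_congr fun a => ?_
    have : ∀ y : Fin n → ℝ, (E' i).indicator (1 : (Fin (n+1) → ℝ) → ℝ≥0∞) (i.insertNth (α := fun _ => ℝ) a y)
        = (univ.pi fun _ => Ioi a).indicator (1 : (Fin n → ℝ) → ℝ≥0∞) y := by
      intro y
      simp only [indicator, E', mem_ofPred_eq, Fin.insertNth_apply_same,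
        Fin.insertNth_apply_succAbove, mem_univ_pi, mem_Ioi]
      rfl
    simp only [this]
    rw [lintegral_indicator_one (MeasurableSet.univ_pi fun _ => measurableSet_Ioi),
      Measure.pi_pi]
    simp [measure_congr (Ioi_ae_eq_Ici (μ := pareto1) (a := a))]
  have h3 : ∑ _i : Fin (n+1), I ≤ 1 := by
    calc _ = ∑ i : Fin (n+1), (Measure.pi fun _ : Fin (n+1) => pareto1) (E' i) :=
          Finset.sum_congr rfl fun i _ => (h2 i).symm
      _ = (Measure.pi fun _ : Fin (n+1) => pareto1) (⋃ i ∈ Finset.univ, E' i) := by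
          rw [measure_biUnion_finset]
          · intro i _ j _ hij
            refine Set.disjoint_left.2 fun x hx hx' => ?_
            obtain ⟨k, hk⟩ := Fin.exists_succAbove_eq hij.symm
            obtain ⟨l, hl⟩ := Fin.exists_succAbove_eq hij
            have a := hx k
            have b := hx' l
            rw [hk] at a; rw [hl] at b
            exact lt_asymm a b
          · exact fun i _ => hE' i
      _ ≤ 1 := prob_le_one
  have hcov : ∀ x, x ∈ ⋃ i, E i := by
    intro x
    obtain ⟨i, hi⟩ := Finite.exists_min x
    exact mem_iUnion.2 ⟨i, fun k => hi _⟩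
  calc ∫⁻ x, Φ x ∂(Measure.pi fun _ : Fin (n+1) => pareto1)
      = ∫⁻ x in ⋃ i, E i, Φ x ∂(Measure.pi fun _ : Fin (n+1) => pareto1) := by
        rw [eq_univ_of_forall hcov, Measure.restrict_univ]
    _ ≤ ∑' i, ∫⁻ x in E i, Φ x ∂(Measure.pi fun _ : Fin (n+1) => pareto1) :=
        lintegral_iUnion_le _ _
    _ = (∑ _i : Fin (n+1), I) * M := by
        rw [tsum_fintype, Finset.sum_mul]; exact Finset.sum_congr rfl fun i _ => h1 i
    _ ≤ 1 * M := by gcongr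
    _ = M := one_mul _
lemma hGamma_mul (γ a w : ℝ) (ha : 0 < a) (hw : 0 < w) :
    hGamma γ (a * w) = a ^ γ * hGamma γ w + hGamma γ a := by
  unfold hGamma
  split_ifs with h
  · subst h; rw [Real.log_mul ha.ne' hw.ne']; simp; ring
  · rw [Real.mul_rpow ha.le hw.le]; field_simp; ring

lemma hGamma_nonneg (γ w : ℝ) (hw : 1 ≤ w) : 0 ≤ hGamma γ w := by
  unfold hGamma
  split_ifs with h
  · exact Real.log_nonneg hw
  · rcases lt_or_gt_of_ne h with h | h
    · have := Real.rpow_le_one_of_one_le_of_nonpos hw h.le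
      exact div_nonneg_of_nonpos (by linarith) h.le
    · have := Real.one_le_rpow hw h.le
      exact div_nonneg (by linarith) h.le

lemma gpPi_eq (γ : ℝ) (n : ℕ) : gpPi γ n
    = (Measure.pi fun _ : Fin n => pareto1).map (fun w k => hGamma γ (w k)) := by
  have : IsProbabilityMeasure (pareto1.map (hGamma γ)) :=
    inferInstanceAs (IsProbabilityMeasure (gpMeasure γ))
  rw [Measure.pi_map_pi (μ := fun _ : Fin n => pareto1) (f := fun _ => hGamma γ)
    (fun _ => (measurable_hGamma γ).aemeasurable)]
  rfl

lemma gp_step (γ : ℝ) {q : ℕ} {K : (Fin q → ℝ) → ℝ} (hK : Measurable K)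
    (hLS : LocScaleInvariant K) (g : ℝ → ℝ≥0∞) (hg : Measurable g) (n : ℕ) (hn : q ≤ n + 1) :
    ∫⁻ z, g (Km K (n+1) z) ∂(gpPi γ (n+1)) ≤ ∫⁻ z, g (Km K n z) ∂(gpPi γ n) := by
  have hm : ∀ n, Measurable (fun (w : Fin n → ℝ) k => hGamma γ (w k)) := fun n =>
    measurable_pi_lambda _ fun k => (measurable_hGamma γ).comp (measurable_pi_apply k)
  have hgk : ∀ n, Measurable (fun z => g (Km K n z)) := fun n => hg.comp (measurable_Km hK n)
  rw [gpPi_eq, gpPi_eq, lintegral_map (hgk _) (hm _), lintegral_map (hgk _) (hm _)]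
  refine pareto_step _ ((hgk _).comp (hm _)) _ fun i a w ha hw => ?_
  have ha0 : 0 < a := by linarith
  have e : (fun k => hGamma γ (i.insertNth (α := fun _ => ℝ) a (fun k => a * w k) k))
      = fun k => a ^ γ * (i.insertNth (α := fun _ => ℝ) 0 (fun k => hGamma γ (w k)) k)
        + hGamma γ a := by
    funext k
    refine Fin.succAboveCases i ?_ (fun k => ?_) k
    · simp
    · simp [hGamma_mul γ a (w k) ha0 (by linarith [hw k])]
  change g (Km K (n+1) (fun k => hGamma γ (i.insertNth (α := fun _ => ℝ) a (fun k => a * w k) k))) = _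
  rw [e, Km_affine hLS hn _ _ _ (Real.rpow_pos_of_pos ha0 _)]
  congr 1
  unfold Km
  congr 1
  funext j
  exact descStat_insertNth i _ (fun k => hGamma_nonneg γ _ (hw k)) j

lemma gp_moment (γ : ℝ) {q : ℕ} {K : (Fin q → ℝ) → ℝ} (hK : Measurable K)
    (hLS : LocScaleInvariant K) (g : ℝ → ℝ≥0∞) (hg : Measurable g) (m : ℕ) (hm : q - 1 ≤ m) :
    ∫⁻ z, g (Km K m z) ∂(gpPi γ m) ≤ ∫⁻ z, g (K (refVec z)) ∂(gpPi γ (q-1)) := by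
  induction m, hm using Nat.le_induction with
  | base => exact le_rfl
  | succ n hn ih => exact (gp_step γ hK hLS g hg n (by omega)).trans ih
/-- positive type of order `m` -/
def PT (m : ℕ) (η : ℕ → ℝ) : Prop :=
  ∀ (ι : Type) [Fintype ι] (S : ι → Finset ℕ) (c : ι → ℝ), (∀ i, (S i).card = m) →
    0 ≤ ∑ i, ∑ j, c i * c j * η ((S i ∩ S j).card)

lemma PT.diff {m : ℕ} {η : ℕ → ℝ} (h : PT (m+1) η) : PT m (fwdDiff 1 η) := by
  intro ι _ S c hS
  let e : ℕ ↪ ℕ := addRightEmbedding 2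
  have hne : ∀ (A : Finset ℕ) (b : ℕ), b < 2 → b ∉ A.map e := by
    intro A b hb hmem
    simp only [Finset.mem_map, e, addRightEmbedding_apply] at hmem
    obtain ⟨a, _, ha⟩ := hmem
    omega
  let T : ι × Bool → Finset ℕ := fun p => insert (if p.2 then 1 else 0) ((S p.1).map e)
  have hT : ∀ p, (T p).card = m + 1 := by
    intro p
    simp only [T]
    rw [Finset.card_insert_of_notMem (hne _ _ (by split_ifs <;> omega)), Finset.card_map, hS]
  have hI1 : ∀ i j (b : Bool), (T (i,b) ∩ T (j,b)).card = (S i ∩ S j).card + 1 := by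
    intro i j b
    simp only [T]
    rw [← Finset.insert_inter_distrib, ← Finset.map_inter,
      Finset.card_insert_of_notMem (hne _ _ (by split_ifs <;> omega)), Finset.card_map]
  have hI2 : ∀ i j (b b' : Bool), b ≠ b' → (T (i,b) ∩ T (j,b')).card = (S i ∩ S j).card := by
    intro i j b b' hb
    simp only [T]
    rw [Finset.insert_inter_of_notMem, Finset.inter_insert_of_notMem, ← Finset.map_inter,
      Finset.card_map]
    · exact hne _ _ (by split_ifs <;> omega)
    · rw [Finset.mem_insert, not_or]
      refine ⟨?_, hne _ _ (by split_ifs <;> omega)⟩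
      revert hb; cases b <;> cases b' <;> simp
  have := h (ι × Bool) T (fun p => if p.2 then c p.1 else - c p.1) hT
  simp only [Fintype.sum_prod_type, Fintype.sum_bool, if_true, Bool.false_eq_true, if_false,
    hI1, hI2 _ _ true false (by simp), hI2 _ _ false true (by simp)] at this
  have h2 : 0 ≤ ∑ i, ∑ j, 2 * (c i * c j * fwdDiff 1 η ((S i ∩ S j).card)) := by
    refine this.trans (le_of_eq ?_)
    refine Finset.sum_congr rfl fun i _ => ?_
    rw [← Finset.sum_add_distrib]
    refine Finset.sum_congr rfl fun j _ => ?_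
    simp only [fwdDiff]
    ring
  simp only [← Finset.mul_sum] at h2
  linarith

lemma PT.zero_nonneg {m : ℕ} {η : ℕ → ℝ} (h : PT m η) : 0 ≤ η 0 := by
  by_contra! hneg
  obtain ⟨N, hN⟩ := exists_nat_gt (|η m| / (-η 0) + 1)
  have hN1 : (1:ℝ) < N := lt_of_le_of_lt (by
    have : 0 ≤ |η m| / (-η 0) := div_nonneg (abs_nonneg _) (by linarith)
    linarith) hN
  have := h (Fin N) (fun i => Finset.Ico (i * m) (i * m + m)) (fun _ => 1) (by simp)
  have key : ∀ i j : Fin N, (1:ℝ) * 1 *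
      η ((Finset.Ico (i * m) (i * m + m) ∩ Finset.Ico (j * m) (j * m + m)).card)
      = η 0 + if i = j then (η m - η 0) else 0 := by
    intro i j
    split_ifs with hij
    · subst hij; simp
    · have : Finset.Ico (i * m) (i * m + m) ∩ Finset.Ico (j * m) (j * m + m) = ∅ := by
        ext k
        simp only [Finset.mem_inter, Finset.mem_Ico, Finset.notMem_empty, iff_false]
        rintro ⟨⟨a, b⟩, c, d⟩
        rcases lt_or_gt_of_ne (fun h => hij (Fin.ext h) : (i:ℕ) ≠ j) with h | h
        · have : (i + 1 : ℕ) * m ≤ j * m := Nat.mul_le_mul_right _ h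
          rw [add_mul] at this; omega
        · have : (j + 1 : ℕ) * m ≤ i * m := Nat.mul_le_mul_right _ h
          rw [add_mul] at this; omega
      rw [this]; simp
  simp only [key, Finset.sum_add_distrib, Finset.sum_const, Finset.card_univ, Fintype.card_fin,
    Finset.sum_ite_eq, Finset.mem_univ, if_true, nsmul_eq_mul] at this
  have h3 : |η m| < (N - 1) * (-η 0) := by
    rw [← div_lt_iff₀ (by linarith)]; linarith
  have h4 := le_abs_self (η m)
  have : 0 ≤ N * (N * η 0 + (η m - η 0)) := by linarith
  have h5 : N * η 0 + (η m - η 0) < 0 := by linarith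
  nlinarith

lemma PT.iter {m : ℕ} {η : ℕ → ℝ} (h : PT m η) (j : ℕ) (hj : j ≤ m) :
    0 ≤ (fwdDiff 1)^[j] η 0 := by
  induction j generalizing m η with
  | zero => exact h.zero_nonneg
  | succ j ih =>
    obtain ⟨k, rfl⟩ : ∃ k, m = k + 1 := ⟨m - 1, by omega⟩
    rw [Function.iterate_succ_apply]
    exact ih h.diff (by omega)

lemma choose_ratio (l m j : ℕ) (hlm : l ≤ m) (hj : 2 ≤ j) :
    (l.choose j : ℝ) * (m:ℝ)^2 ≤ (l:ℝ)^2 * m.choose j := by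
  rcases lt_or_ge l j with h | h
  · rw [Nat.choose_eq_zero_of_lt h]; simp; positivity
  have e1 : (l.choose j : ℝ) * (j.choose 2) = l.choose 2 * (l-2).choose (j-2) := by
    exact_mod_cast Nat.choose_mul hj
  have e2 : (m.choose j : ℝ) * (j.choose 2) = m.choose 2 * (m-2).choose (j-2) := by
    exact_mod_cast Nat.choose_mul hj
  have hp : (0:ℝ) < j.choose 2 := by exact_mod_cast Nat.choose_pos hj
  have h3 : ((l-2).choose (j-2) : ℝ) ≤ (m-2).choose (j-2) := by
    exact_mod_cast Nat.choose_le_choose _ (by omega)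
  have hlm' : (l:ℝ) ≤ m := by exact_mod_cast hlm
  have h4 : (l.choose 2 : ℝ) * m^2 ≤ l^2 * m.choose 2 := by
    rw [Nat.cast_choose_two, Nat.cast_choose_two]
    have : 0 ≤ (l:ℝ) * m := by positivity
    nlinarith
  rw [← mul_le_mul_iff_left₀ hp]
  calc (l.choose j : ℝ) * m^2 * j.choose 2 = ((l.choose 2:ℝ) * m^2) * ((l-2).choose (j-2) : ℝ) := by
        rw [mul_right_comm, e1]; ring
    _ ≤ ((l:ℝ)^2 * m.choose 2) * ((m-2).choose (j-2) : ℝ) := by gcongr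
    _ = _ := by rw [mul_assoc, ← e2]; ring

lemma PT.bound {m : ℕ} {η : ℕ → ℝ} (h : PT m η) (l : ℕ) (hl : 1 ≤ l) (hlm : l ≤ m) :
    (m:ℝ) * |(l:ℝ)⁻¹ * (η l - η 0) - (η 1 - η 0)| ≤ (l:ℝ) / m * η m := by
  have hl0 : (0:ℝ) < l := by exact_mod_cast hl
  have hm0 : (0:ℝ) < m := by exact_mod_cast (lt_of_lt_of_le hl hlm)
  set v : ℕ → ℝ := fun j => (fwdDiff 1)^[j] η 0 with hv
  have newt : ∀ n, η n = ∑ k ∈ Finset.range (n+1), (n.choose k : ℝ) * v k := by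
    intro n
    have := shift_eq_sum_fwdDiff_iter (h := 1) η n 0
    simpa [nsmul_eq_mul] using this
  have v0 : v 0 = η 0 := rfl
  have v1 : v 1 = η 1 - η 0 := by simp [hv, fwdDiff]
  have newt2 : ∀ n, 1 ≤ n → η n = η 0 + n * (η 1 - η 0)
      + ∑ k ∈ Finset.Ico 2 (n+1), (n.choose k : ℝ) * v k := by
    intro n hn
    conv_lhs => rw [newt n, Finset.range_eq_Ico, Finset.sum_eq_sum_Ico_succ_bot (by omega),
      Finset.sum_eq_sum_Ico_succ_bot (by omega)]
    simp [v0, v1]; ring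
  have hvn : ∀ j, j ≤ m → 0 ≤ v j := fun j hj => h.iter j hj
  have hR0 : 0 ≤ ∑ k ∈ Finset.Ico 2 (l+1), (l.choose k : ℝ) * v k :=
    Finset.sum_nonneg fun k hk => mul_nonneg (by positivity)
      (hvn k (by simp at hk; omega))
  have hR : (∑ k ∈ Finset.Ico 2 (l+1), (l.choose k : ℝ) * v k) * m^2 ≤ l^2 * η m := by
    have h1 : l^2 * ∑ k ∈ Finset.Ico 2 (m+1), (m.choose k : ℝ) * v k ≤ l^2 * η m := by
      have := newt2 m (by omega)
      have a := hvn 0 (by omega)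
      have b := hvn 1 (by omega)
      rw [v0] at a; rw [v1] at b
      have : 0 ≤ (m:ℝ) * (η 1 - η 0) := by positivity
      gcongr; linarith
    refine le_trans ?_ h1
    rw [Finset.sum_mul, Finset.mul_sum]
    calc _ ≤ ∑ k ∈ Finset.Ico 2 (l+1), (l:ℝ)^2 * ((m.choose k : ℝ) * v k) := by
          refine Finset.sum_le_sum fun k hk => ?_
          simp at hk
          have := choose_ratio l m k hlm hk.1
          have := mul_le_mul_of_nonneg_right this (hvn k (by omega))
          linarith
      _ ≤ _ := by
          refine Finset.sum_le_sum_of_subset_of_nonneg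
            (Finset.Ico_subset_Ico le_rfl (by omega)) fun k hk _ => ?_
          simp at hk
          have := hvn k (by omega)
          positivity
  have e : (l:ℝ)⁻¹ * (η l - η 0) - (η 1 - η 0)
      = (l:ℝ)⁻¹ * ∑ k ∈ Finset.Ico 2 (l+1), (l.choose k : ℝ) * v k := by
    rw [newt2 l hl]; field_simp; ring
  rw [e, abs_of_nonneg (by positivity)]
  rw [div_mul_eq_mul_div, le_div_iff₀ hm0]
  set R := ∑ k ∈ Finset.Ico 2 (l+1), (l.choose k : ℝ) * v k
  calc (m:ℝ) * ((l:ℝ)⁻¹ * R) * m = (l:ℝ)⁻¹ * (R * m^2) := by ring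
    _ ≤ (l:ℝ)⁻¹ * (l^2 * η m) := by gcongr
    _ = l * η m := by field_simp
section prob
variable {Ω : Type*} [MeasurableSpace Ω] {P : Measure Ω} [IsProbabilityMeasure P]
    {γ : ℝ} {q : ℕ} {K : (Fin q → ℝ) → ℝ}
    {Z : ℕ → Ω → ℝ}

/-- kernel at the points indexed by `u` -/
def XK (K : (Fin q → ℝ) → ℝ) (Z : ℕ → Ω → ℝ) {m : ℕ} (u : Fin m → ℕ) (ω : Ω) : ℝ :=
  Km K m (fun i => Z (u i) ω)

lemma law_inj (hZmeas : ∀ i, Measurable (Z i)) (hIndep : iIndepFun Z P)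
    (hDist : ∀ i, Measure.map (Z i) P = gpMeasure γ) {N : ℕ} (σ : Fin N → ℕ)
    (hσ : Function.Injective σ) : P.map (fun ω i => Z (σ i) ω) = gpPi γ N := by
  have h := (iIndepFun_iff_map_fun_eq_pi_map (f := fun i => Z (σ i))
    (fun i => (hZmeas _).aemeasurable)).1 (hIndep.precomp hσ)
  rw [h]
  simp only [hDist]
  rfl

lemma meas_tuple (hZmeas : ∀ i, Measurable (Z i)) {N : ℕ} (σ : Fin N → ℕ) :
    Measurable (fun ω i => Z (σ i) ω) :=
  measurable_pi_lambda _ fun _ => hZmeas _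

lemma XK_perm {m : ℕ} (S : Finset ℕ) (hS : S.card = m) (u v : Fin m → ℕ)
    (hu : Function.Injective u) (hv : Function.Injective v) (huS : ∀ i, u i ∈ S)
    (hvS : ∀ i, v i ∈ S) : XK K Z u = XK K Z v := by
  have key : ∀ w : Fin m → ℕ, Function.Injective w → (∀ i, w i ∈ S) →
      ∀ s ∈ S, ∃ i, w i = s := by
    intro w hw hwS s hs
    have : Finset.univ.image w = S := Finset.eq_of_subset_of_card_le
      (by intro x hx; obtain ⟨i, _, rfl⟩ := Finset.mem_image.1 hx; exact hwS i)
      (by rw [Finset.card_image_of_injective _ hw]; simp [hS])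
    rw [← this] at hs
    simpa using hs
  choose f hf using fun i => key v hv hvS (u i) (huS i)
  have hfi : Function.Injective f := fun a b h => hu (by rw [← hf a, ← hf b, h])
  let σ : Equiv.Perm (Fin m) := Equiv.ofBijective f (Finite.injective_iff_bijective.1 hfi)
  funext ω
  unfold XK
  rw [← Km_comp_perm K (fun i => Z (v i) ω) σ]
  congr 1
  funext i
  simp [σ, hf]

lemma XK_memLp (hK : Measurable K) (hLS : LocScaleInvariant K) (hMom : MomentCond γ K)
    (hZmeas : ∀ i, Measurable (Z i)) (hIndep : iIndepFun Z P)
    (hDist : ∀ i, Measure.map (Z i) P = gpMeasure γ) {m : ℕ} (hm : q - 1 ≤ m) (u : Fin m → ℕ)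
    (hu : Function.Injective u) : MemLp (XK K Z u) 2 P ∧ ∫ ω, (XK K Z u ω)^2 ∂P ≤
      (∫⁻ z, ENNReal.ofReal (|K (refVec z)| ^ (2:ℝ)) ∂(gpPi γ (q-1))).toReal := by
  have hg : Measurable (fun t : ℝ => ENNReal.ofReal (|t| ^ (2:ℝ))) := by fun_prop
  have hX : Measurable (XK K Z u) := (measurable_Km hK m).comp (meas_tuple hZmeas u)
  have h1 : ∫⁻ ω, ENNReal.ofReal ((XK K Z u ω)^2) ∂P
      ≤ ∫⁻ z, ENNReal.ofReal (|K (refVec z)| ^ (2:ℝ)) ∂(gpPi γ (q-1)) := by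
    refine le_trans (le_of_eq ?_) (gp_moment γ hK hLS _ hg m hm)
    rw [← law_inj hZmeas hIndep hDist u hu,
      lintegral_map (f := fun z => ENNReal.ofReal (|Km K m z| ^ (2:ℝ)))
        (hg.comp (measurable_Km hK m)) (meas_tuple hZmeas u)]
    refine lintegral_congr fun ω => ?_
    simp [XK]
  have hfin := hMom 2 (by norm_num)
  have h2 : ∫ ω, (XK K Z u ω)^2 ∂P = (∫⁻ ω, ENNReal.ofReal ((XK K Z u ω)^2) ∂P).toReal :=
    integral_eq_lintegral_of_nonneg_ae (ae_of_all _ fun ω => sq_nonneg _)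
      (hX.pow_const 2).aestronglyMeasurable
  refine ⟨?_, ?_⟩
  · rw [memLp_two_iff_integrable_sq hX.aestronglyMeasurable]
    refine ⟨(hX.pow_const 2).aestronglyMeasurable, ?_⟩
    rw [hasFiniteIntegral_iff_ofReal (ae_of_all _ fun ω => sq_nonneg _)]
    exact h1.trans_lt hfin
  · rw [h2]
    exact ENNReal.toReal_mono hfin.ne h1

/-- cross moment -/
def etaX (P : Measure Ω) (K : (Fin q → ℝ) → ℝ) (Z : ℕ → Ω → ℝ) (m ℓ : ℕ) : ℝ :=
  ∫ ω, XK K Z (fun i : Fin m => (i : ℕ)) ω * XK K Z (fun i : Fin m => m - ℓ + i) ω ∂P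

lemma cross_law (hK : Measurable K) 
    (hZmeas : ∀ i, Measurable (Z i)) (hIndep : iIndepFun Z P)
    (hDist : ∀ i, Measure.map (Z i) P = gpMeasure γ) {m N : ℕ} (a b : Fin m → Fin N)
    (σ : Fin N → ℕ) (hσ : Function.Injective σ) :
    ∫ ω, XK K Z (fun i => σ (a i)) ω * XK K Z (fun i => σ (b i)) ω ∂P
      = ∫ z, Km K m (fun i => z (a i)) * Km K m (fun i => z (b i)) ∂(gpPi γ N) := by
  rw [← law_inj hZmeas hIndep hDist σ hσ, integral_map (meas_tuple hZmeas σ).aemeasurable]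
  · rfl
  · refine Measurable.aestronglyMeasurable (Measurable.mul ?_ ?_)
    · exact (measurable_Km hK m).comp (measurable_pi_lambda _ fun i => measurable_pi_apply _)
    · exact (measurable_Km hK m).comp (measurable_pi_lambda _ fun i => measurable_pi_apply _)

lemma mean_law (hK : Measurable K) 
    (hZmeas : ∀ i, Measurable (Z i)) (hIndep : iIndepFun Z P)
    (hDist : ∀ i, Measure.map (Z i) P = gpMeasure γ) {m : ℕ}
    (σ : Fin m → ℕ) (hσ : Function.Injective σ) :
    ∫ ω, XK K Z σ ω ∂P = ∫ z, Km K m z ∂(gpPi γ m) := by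
  rw [← law_inj hZmeas hIndep hDist σ hσ, integral_map (meas_tuple hZmeas σ).aemeasurable]
  · rfl
  · exact (measurable_Km hK m).aestronglyMeasurable

lemma cross_eq (hK : Measurable K)
    (hZmeas : ∀ i, Measurable (Z i)) (hIndep : iIndepFun Z P)
    (hDist : ∀ i, Measure.map (Z i) P = gpMeasure γ) {m : ℕ} (S T : Finset ℕ)
    (hS : S.card = m) (hT : T.card = m) (u v : Fin m → ℕ)
    (hu : Function.Injective u) (hv : Function.Injective v) (huS : ∀ i, u i ∈ S)
    (hvT : ∀ i, v i ∈ T) :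
    ∫ ω, XK K Z u ω * XK K Z v ω ∂P = etaX P K Z m (S ∩ T).card := by
  set ℓ := (S ∩ T).card with hℓ
  have hℓm : ℓ ≤ m := hS ▸ Finset.card_le_card Finset.inter_subset_left
  have c1 : (S \ T).card = m - ℓ := by
    have := Finset.card_sdiff_add_card_inter S T; omega
  have c2 : (T \ S).card = m - ℓ := by
    have := Finset.card_sdiff_add_card_inter T S; rw [Finset.inter_comm] at this; omega
  let L : List ℕ := (S \ T).toList ++ ((S ∩ T).toList ++ (T \ S).toList)
  have hLlen : L.length = 2 * m - ℓ := by simp [L, c1, c2, ← hℓ]; omega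
  have hnd : L.Nodup := by
    simp only [L, List.nodup_append', Finset.nodup_toList, true_and, List.disjoint_left,
      Finset.mem_toList, List.mem_append, Finset.mem_sdiff, Finset.mem_inter]
    grind
  let σ : Fin (2*m-ℓ) → ℕ := fun i => L.get (i.cast hLlen.symm)
  have hσ : Function.Injective σ := fun x y h => by
    have := List.nodup_iff_injective_get.1 hnd h
    simpa using this
  let a : Fin m → Fin (2*m-ℓ) := fun i => ⟨i, by omega⟩
  let b : Fin m → Fin (2*m-ℓ) := fun i => ⟨m - ℓ + i, by omega⟩
  have ha : Function.Injective a := fun x y h => by simpa [a, Fin.ext_iff] using h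
  have hb : Function.Injective b := fun x y h => by simpa [b, Fin.ext_iff] using h
  have haS : ∀ i, σ (a i) ∈ S := by
    intro i
    have hi : (i:ℕ) < ((S \ T).toList ++ (S ∩ T).toList).length := by simp [c1, ← hℓ]; omega
    have : σ (a i) = ((S \ T).toList ++ (S ∩ T).toList)[(i:ℕ)] := by
      simp only [σ, a, L, List.get_eq_getElem, Fin.val_cast, ← List.append_assoc]
      rw [List.getElem_append_left hi]
    rw [this]
    have := List.getElem_mem hi
    simp only [List.mem_append, Finset.mem_toList, Finset.mem_sdiff, Finset.mem_inter] at this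
    tauto
  have hbT : ∀ i, σ (b i) ∈ T := by
    intro i
    have hi : (i:ℕ) < ((S ∩ T).toList ++ (T \ S).toList).length := by simp [c2, ← hℓ]; omega
    have : σ (b i) = ((S ∩ T).toList ++ (T \ S).toList)[(i:ℕ)] := by
      simp only [σ, b, L, List.get_eq_getElem, Fin.val_cast]
      rw [List.getElem_append_right (by simp [c1])]
      congr 1
      simp [c1]
    rw [this]
    have := List.getElem_mem hi
    simp only [List.mem_append, Finset.mem_toList, Finset.mem_sdiff, Finset.mem_inter] at this
    tauto
  rw [XK_perm S hS u (fun i => σ (a i)) hu (hσ.comp ha) huS haS,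
    XK_perm T hT v (fun i => σ (b i)) hv (hσ.comp hb) hvT hbT,
    cross_law hK hZmeas hIndep hDist a b σ hσ,
    ← cross_law hK hZmeas hIndep hDist a b (fun i => (i:ℕ)) Fin.val_injective]
  rfl

lemma XK_PT (hK : Measurable K) (hLS : LocScaleInvariant K) (hMom : MomentCond γ K)
    (hZmeas : ∀ i, Measurable (Z i)) (hIndep : iIndepFun Z P)
    (hDist : ∀ i, Measure.map (Z i) P = gpMeasure γ) {m : ℕ} (hm : q - 1 ≤ m) :
    PT m (etaX P K Z m) := by
  intro ι _ S c hS
  let u : ∀ i, Fin m → ℕ := fun i => (S i).orderEmbOfFin (hS i)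
  have hu : ∀ i, Function.Injective (u i) := fun i => (Finset.orderEmbOfFin _ _).injective
  have huS : ∀ i k, u i k ∈ S i := fun i k => Finset.orderEmbOfFin_mem _ _ _
  have hL : ∀ i, MemLp (XK K Z (u i)) 2 P := fun i =>
    (XK_memLp hK hLS hMom hZmeas hIndep hDist hm (u i) (hu i)).1
  have hint : ∀ i j, Integrable (fun ω => c i * c j * (XK K Z (u i) ω * XK K Z (u j) ω)) P :=
    fun i j => ((hL i).integrable_mul (hL j)).const_mul _
  calc 0 ≤ ∫ ω, (∑ i, c i * XK K Z (u i) ω)^2 ∂P := integral_nonneg fun ω => sq_nonneg _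
    _ = ∫ ω, ∑ i, ∑ j, c i * c j * (XK K Z (u i) ω * XK K Z (u j) ω) ∂P := by
        refine integral_congr_ae (ae_of_all _ fun ω => ?_)
        simp only
        rw [sq, Finset.sum_mul_sum]
        refine Finset.sum_congr rfl fun i _ => Finset.sum_congr rfl fun j _ => ?_
        ring
    _ = _ := by
        rw [integral_finsetSum _ fun i _ => integrable_finsetSum _ fun j _ => hint i j]
        refine Finset.sum_congr rfl fun i _ => ?_
        rw [integral_finsetSum _ fun j _ => hint i j]
        refine Finset.sum_congr rfl fun j _ => ?_
        rw [integral_const_mul, cross_eq hK hZmeas hIndep hDist (S i) (S j) (hS i) (hS j) (u i)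
          (u j) (hu i) (hu j) (huS i) (huS j)]

lemma etaX_zero (hK : Measurable K)
    (hZmeas : ∀ i, Measurable (Z i)) (hIndep : iIndepFun Z P)
    (m : ℕ) :
    etaX P K Z m 0 = (∫ ω, XK K Z (fun i : Fin m => (i : ℕ)) ω ∂P)
      * (∫ ω, XK K Z (fun i : Fin m => m - 0 + i) ω ∂P) := by
  have h := hIndep.indepFun_finset (Finset.range m) (Finset.Ico m (2*m))
    (by rw [Finset.disjoint_left]; intro x hx hx'; simp at hx hx'; omega) hZmeas
  have h' := h.comp
    (φ := fun z : (Finset.range m → ℝ) => Km K m (fun i : Fin m => z ⟨i, by simp⟩))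
    (ψ := fun z : (Finset.Ico m (2*m) → ℝ) => Km K m (fun i : Fin m => z ⟨m - 0 + i, by simp; omega⟩))
    ((measurable_Km hK m).comp (measurable_pi_lambda _ fun i => measurable_pi_apply _))
    ((measurable_Km hK m).comp (measurable_pi_lambda _ fun i => measurable_pi_apply _))
  refine h'.integral_mul_eq_mul_integral ?_ ?_
  · exact ((measurable_Km hK m).comp (meas_tuple hZmeas _)).aestronglyMeasurable
  · exact ((measurable_Km hK m).comp (meas_tuple hZmeas _)).aestronglyMeasurable

lemma zetaCov_eq (hK : Measurable K)
    (hZmeas : ∀ i, Measurable (Z i)) (hIndep : iIndepFun Z P)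
    (hDist : ∀ i, Measure.map (Z i) P = gpMeasure γ) (m ℓ : ℕ) :
    zetaCov P K Z m ℓ = etaX P K Z m ℓ - etaX P K Z m 0 := by
  have hi : ∀ k, Function.Injective (fun i : Fin m => k + (i:ℕ)) := fun k x y h => by
    simpa [Fin.ext_iff] using h
  rw [etaX_zero hK hZmeas hIndep, mean_law hK hZmeas hIndep hDist _ (hi (m-0)),
    ← mean_law hK hZmeas hIndep hDist _ (hi (m-ℓ))]
  rfl

lemma zeta_bound (hK : Measurable K) (hLS : LocScaleInvariant K) (hMom : MomentCond γ K)
    (hZmeas : ∀ i, Measurable (Z i)) (hIndep : iIndepFun Z P)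
    (hDist : ∀ i, Measure.map (Z i) P = gpMeasure γ) {m : ℕ} (hm : q - 1 ≤ m)
    (ℓ : ℕ) (h1 : 1 ≤ ℓ) (hℓ : ℓ ≤ m) :
    (m:ℝ) * |(ℓ:ℝ)⁻¹ * zetaCov P K Z m ℓ - zetaCov P K Z m 1| ≤ (ℓ:ℝ) / m *
      (∫⁻ z, ENNReal.ofReal (|K (refVec z)| ^ (2:ℝ)) ∂(gpPi γ (q-1))).toReal := by
  rw [zetaCov_eq hK hZmeas hIndep hDist, zetaCov_eq hK hZmeas hIndep hDist]
  refine ((XK_PT hK hLS hMom hZmeas hIndep hDist hm).bound ℓ h1 hℓ).trans ?_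
  have : etaX P K Z m m = ∫ ω, (XK K Z (fun i : Fin m => (i:ℕ)) ω)^2 ∂P := by
    unfold etaX
    simp only [Nat.sub_self, zero_add, sq]
  rw [this]
  gcongr
  exact (XK_memLp hK hLS hMom hZmeas hIndep hDist hm _ Fin.val_injective).2

end prob

/-- Lemma: uniform approximation `ζ_{m,ℓ} ≈ ℓ ζ_{m,1}`.
Under the kernel and degree conditions,
`max_{1 ≤ ℓ ≤ ℓ_n} |ℓ⁻¹ ζ_{m,ℓ} - ζ_{m,1}| = o(1/m)` as `n → ∞`. -/
theorem zeta_uniform_approximation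
    {Ω : Type*} [MeasurableSpace Ω] (P : Measure Ω) [IsProbabilityMeasure P]
    (γ : ℝ) (q : ℕ) (hq : 3 ≤ q)
    (K : (Fin q → ℝ) → ℝ) (hKmeas : Measurable K)
    (hLS : LocScaleInvariant K)
    (hNonconst : ∃ x y : Fin q → ℝ, K x ≠ K y)
    (hMom : MomentCond γ K)
    (m : ℕ → ℕ) (hDeg : DegreeCond m)
    (Z : ℕ → Ω → ℝ) (hZmeas : ∀ i, Measurable (Z i))
    (hIndep : iIndepFun Z P)
    (hDist : ∀ i, Measure.map (Z i) P = gpMeasure γ) :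
    Tendsto
      (fun n : ℕ => (m n : ℝ) *
        (⨆ ℓ ∈ Finset.Icc 1 (ellSeq m n),
          |(ℓ : ℝ)⁻¹ * zetaCov P K Z (m n) ℓ - zetaCov P K Z (m n) 1|))
      atTop (𝓝 0) := by
  obtain ⟨ε, hε, δ, hδ, h1, h2⟩ := hDeg
  set C := (∫⁻ z, ENNReal.ofReal (|K (refVec z)| ^ (2:ℝ)) ∂(gpPi γ (q-1))).toReal with hC
  have hC0 : 0 ≤ C := ENNReal.toReal_nonneg
  let b : ℕ → ℝ := fun n => |(m n : ℝ) / (n : ℝ) ^ (1 - ε)|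
    + Real.sqrt |Real.log n / (m n : ℝ) ^ (1 - δ)|
  have hb : Tendsto b atTop (𝓝 0) := by
    have := h1.abs.add (Real.continuous_sqrt.continuousAt.tendsto.comp h2.abs)
    simpa using this
  have hCb : Tendsto (fun n => C * b n) atTop (𝓝 0) := by simpa using hb.const_mul C
  have hlog : Tendsto (fun n : ℕ => Real.log n) atTop atTop :=
    Real.tendsto_log_atTop.comp tendsto_natCast_atTop_atTop
  refine tendsto_of_tendsto_of_tendsto_of_le_of_le' tendsto_const_nhds hCb
    (Eventually.of_forall fun n => ?_) ?_
  · refine mul_nonneg (Nat.cast_nonneg _) (Real.iSup_nonneg fun ℓ => Real.iSup_nonneg fun _ =>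
      abs_nonneg _)
  filter_upwards [hb.eventually (gt_mem_nhds one_pos), h2.eventually (gt_mem_nhds one_pos),
    hlog.eventually_ge_atTop (q:ℝ), eventually_ge_atTop 1] with n hb1 h21 hlq hn1
  have hb0 : 0 ≤ b n := by positivity
  rcases Nat.eq_zero_or_pos (m n) with hm0 | hm0
  · rw [hm0]; simp only [Nat.cast_zero, zero_mul]; positivity
  have hm1 : (1:ℝ) ≤ m n := by exact_mod_cast hm0
  have hmp : (0:ℝ) < m n := by linarith
  have hn1' : (1:ℝ) ≤ n := by exact_mod_cast hn1
  have hn0 : (0:ℝ) < n := by linarith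
  have hl0 : 0 ≤ Real.log n := Real.log_nonneg hn1'
  have hp : (0:ℝ) < (m n : ℝ) ^ (1 - δ) := Real.rpow_pos_of_pos hmp _
  have hple : (m n : ℝ) ^ (1 - δ) ≤ m n := by
    calc (m n : ℝ) ^ (1 - δ) ≤ (m n : ℝ) ^ (1:ℝ) :=
          Real.rpow_le_rpow_of_exponent_le hm1 (by linarith)
      _ = m n := Real.rpow_one _
  have hnle : (n : ℝ) ^ (1 - ε) ≤ n := by
    calc (n : ℝ) ^ (1 - ε) ≤ (n : ℝ) ^ (1:ℝ) :=
          Real.rpow_le_rpow_of_exponent_le hn1' (by linarith)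
      _ = n := Real.rpow_one _
  have hqm : q - 1 ≤ m n := by
    rw [div_lt_one hp] at h21
    have : (q:ℝ) ≤ m n := by linarith
    have : q ≤ m n := by exact_mod_cast this
    omega
  have hr : (m n : ℝ) / (n : ℝ) + Real.sqrt (Real.log n / (2 * (m n : ℝ))) ≤ b n := by
    refine add_le_add ?_ (Real.sqrt_le_sqrt ?_)
    · refine le_trans ?_ (le_abs_self _)
      have : (0:ℝ) < (n : ℝ) ^ (1 - ε) := Real.rpow_pos_of_pos hn0 _
      gcongr
    · refine le_trans ?_ (le_abs_self _)
      gcongr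
      linarith
  have hell : (ellSeq m n : ℝ) ≤ b n * m n := by
    refine le_trans (Nat.floor_le (by positivity)) ?_
    gcongr
  rw [Real.mul_iSup_of_nonneg hmp.le]
  refine Real.iSup_le (fun ℓ => ?_) (by positivity)
  rw [Real.mul_iSup_of_nonneg hmp.le]
  refine Real.iSup_le (fun hℓ => ?_) (by positivity)
  rw [Finset.mem_Icc] at hℓ
  have hℓ' : (ℓ : ℝ) ≤ b n * m n := le_trans (by exact_mod_cast hℓ.2) hell
  have hℓm : ℓ ≤ m n := by
    have : (ℓ:ℝ) ≤ m n := hℓ'.trans (by nlinarith)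
    exact_mod_cast this
  refine (zeta_bound hKmeas hLS hMom hZmeas hIndep hDist hqm ℓ hℓ.1 hℓm).trans ?_
  rw [← hC, mul_comm C]
  gcongr
  rwa [div_le_iff₀ hmp]

end
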